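/- arXiv:2508.17288 — 6 statements merged into one kernel-verified Lean document; each statement's English description precedes it below -/
import Mathlib

section
/- Let f : ℝ^d → ℝ be differentiable and μ-strongly convex with μ ≥ 0, let x* be a minimizer of f with f* = f(x*), let x ∈ ℝ^d with ∇f(x) ≠ 0, and let η satisfy 0 ≤ η ≤ 2(f(x) − f*)/‖∇f(x)‖². Then the gradient step x⁺ = x − η∇f(x) satisfies ‖x⁺ − x*‖² ≤ (1 − μη)‖x − x*‖². -/
local notation "⟪" x ", " y "⟫" => @inner ℝ _ _ x y

/-!
The expansion of `‖x⁺ - x*‖²` has a cross term, which strong convexity turns into the gain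
`2η (f x - f x*)` and the contraction `-μη ‖x - x*‖²`, and an error term `η² ‖∇f x‖²`.
Twice the Polyak stepsize is exactly the threshold up to which the gain pays for the error.
-/

section GradientStep

variable {E : Type*} [NormedAddCommGroup E] [InnerProductSpace ℝ E]

theorem norm_sub_smul_sub_sq (x g y : E) (η : ℝ) :
    ‖(x - η • g) - y‖ ^ 2 = ‖x - y‖ ^ 2 - 2 * η * ⟪g, x - y⟫ + η ^ 2 * ‖g‖ ^ 2 := by
  rw [sub_right_comm, norm_sub_sq_real, real_inner_smul_right, real_inner_comm, norm_smul,
    mul_pow, Real.norm_eq_abs, sq_abs]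
  ring

variable {f : E → ℝ} {μ η : ℝ} {x g y : E}

theorem sub_add_le_inner_of_strong_subgradient
    (hg : f x + ⟪g, y - x⟫ + μ / 2 * ‖y - x‖ ^ 2 ≤ f y) :
    f x - f y + μ / 2 * ‖x - y‖ ^ 2 ≤ ⟪g, x - y⟫ := by
  rw [← neg_sub x y, inner_neg_right, norm_neg] at hg
  linarith

theorem norm_sub_smul_sub_sq_le_of_strong_subgradient
    (hg : f x + ⟪g, y - x⟫ + μ / 2 * ‖y - x‖ ^ 2 ≤ f y) (hη : 0 ≤ η) :
    ‖(x - η • g) - y‖ ^ 2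
      ≤ (1 - μ * η) * ‖x - y‖ ^ 2 - η * (2 * (f x - f y) - η * ‖g‖ ^ 2) :=
  calc
    ‖(x - η • g) - y‖ ^ 2 = ‖x - y‖ ^ 2 - 2 * η * ⟪g, x - y⟫ + η ^ 2 * ‖g‖ ^ 2 :=
      norm_sub_smul_sub_sq x g y η
    _ ≤ ‖x - y‖ ^ 2 - 2 * η * (f x - f y + μ / 2 * ‖x - y‖ ^ 2) + η ^ 2 * ‖g‖ ^ 2 := by
      gcongr
      exact sub_add_le_inner_of_strong_subgradient hg
    _ = (1 - μ * η) * ‖x - y‖ ^ 2 - η * (2 * (f x - f y) - η * ‖g‖ ^ 2) := by ring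

theorem polyak_step_strongly_convex_general
    (hg : f x + ⟪g, y - x⟫ + μ / 2 * ‖y - x‖ ^ 2 ≤ f y)
    (hη0 : 0 ≤ η) (hη : η * ‖g‖ ^ 2 ≤ 2 * (f x - f y)) :
    ‖(x - η • g) - y‖ ^ 2 ≤ (1 - μ * η) * ‖x - y‖ ^ 2 :=
  (norm_sub_smul_sub_sq_le_of_strong_subgradient hg hη0).trans
    (sub_le_self _ (mul_nonneg hη0 (sub_nonneg.mpr hη)))

end GradientStep

/-- One gradient step with a stepsize at most twice the Polyak stepsize,
for a μ-strongly convex differentiable function, contracts the squared distance to a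
minimizer by a factor (1 - μη). -/
theorem polyak_step_strongly_convex
    (d : ℕ) (f : EuclideanSpace ℝ (Fin d) → ℝ) (μ : ℝ) (hμ : 0 ≤ μ)
    (hf : Differentiable ℝ f)
    (hsc : ∀ x y : EuclideanSpace ℝ (Fin d),
      f y ≥ f x + ⟪gradient f x, y - x⟫ + μ / 2 * ‖y - x‖ ^ 2)
    (xstar : EuclideanSpace ℝ (Fin d)) (hmin : ∀ z, f xstar ≤ f z)
    (x : EuclideanSpace ℝ (Fin d)) (hgrad : gradient f x ≠ 0)
    (η : ℝ) (hη0 : 0 ≤ η) (hη : η ≤ 2 * (f x - f xstar) / ‖gradient f x‖ ^ 2) :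
    ‖(x - η • gradient f x) - xstar‖ ^ 2 ≤ (1 - μ * η) * ‖x - xstar‖ ^ 2 := by
  have hgrad_sq : 0 < ‖gradient f x‖ ^ 2 := by positivity
  exact polyak_step_strongly_convex_general (hsc x xstar) hη0 ((le_div_iff₀ hgrad_sq).mp hη)
end

section
/- Let f : ℝ^d → ℝ be differentiable and convex with minimizer x* and f* = f(x*), and suppose f has G-bounded gradients, i.e. ‖∇f(x)‖ ≤ G for all x in a set containing all iterates. Let (x^t)_{t=0}^{k} be generated by gradient descent with Polyak stepsizes, x^{t+1} = x^t − ((f(x^t) − f*)/‖∇f(x^t)‖²)∇f(x^t), with ∇f(x^t) ≠ 0 for t < k. Then min_{t ∈ {0, …, k−1}} (f(x^t) − f*) ≤ G‖x^0 − x*‖/√k. -/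
local notation "⟪" x ", " y "⟫" => @inner ℝ _ _ x y

/-!
If `δ ≤ ⟪g, x - z⟫`, as convexity gives for the gap `δ = f x - f z` and a (sub)gradient `g` at `x`,
then `‖x - η • g - z‖² ≤ ‖x - z‖² - 2ηδ + η²‖g‖²` for every `η ≥ 0`. The Polyak stepsize
`η = δ / ‖g‖²` minimizes the right-hand side and makes it `‖x - z‖² - (δ / ‖g‖)²`. Telescoping over
`k` steps bounds the sum of the `(δ / ‖g‖)²` by `‖x⁰ - z‖²`, so the smallest of the `k` ratios
`δ / ‖g‖` is at most `‖x⁰ - z‖ / √k`.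
-/

theorem exists_le_div_sqrt_card_of_sum_sq_le {ι : Type*} {s : Finset ι} (hs : s.Nonempty)
    {r : ι → ℝ} {R : ℝ} (hR : 0 ≤ R) (hsum : ∑ i ∈ s, r i ^ 2 ≤ R ^ 2) :
    ∃ i ∈ s, r i ≤ R / √s.card := by
  have hcard : (s.card : ℝ) ≠ 0 := Nat.cast_ne_zero.mpr hs.card_ne_zero
  have hmean : ∑ i ∈ s, r i ^ 2 ≤ ∑ _i ∈ s, R ^ 2 / s.card := by
    rwa [Finset.sum_const, nsmul_eq_mul, mul_div_cancel₀ _ hcard]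
  obtain ⟨i, hi, hri⟩ := Finset.exists_le_of_sum_le hs hmean
  refine ⟨i, hi, ?_⟩
  calc r i ≤ √(R ^ 2 / s.card) := Real.le_sqrt_of_sq_le hri
    _ = R / √s.card := by rw [Real.sqrt_div (sq_nonneg R), Real.sqrt_sq hR]

section PolyakStep

variable {E : Type*} [SeminormedAddCommGroup E] [InnerProductSpace ℝ E]

/-- The Polyak update of `x` along the (sub)gradient `g` with suboptimality gap `δ`, which is
`f x - f*` in gradient descent on `f`. The point does not move if `‖g‖ = 0`. -/
noncomputable def polyakStep (x g : E) (δ : ℝ) : E :=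
  x - (δ / ‖g‖ ^ 2) • g

theorem norm_polyakStep_sub_sq (x g z : E) (δ : ℝ) :
    ‖polyakStep x g δ - z‖ ^ 2 =
      ‖x - z‖ ^ 2 - 2 * (δ / ‖g‖ ^ 2 * ⟪g, x - z⟫) + (δ / ‖g‖) ^ 2 := by
  have hstep : ‖(δ / ‖g‖ ^ 2) • g‖ ^ 2 = (δ / ‖g‖) ^ 2 := by
    rw [norm_smul, mul_pow, Real.norm_eq_abs, sq_abs]
    by_cases hg : ‖g‖ = 0
    · simp [hg]
    · field_simp
  rw [polyakStep, sub_right_comm, norm_sub_sq_real, hstep, real_inner_smul_right,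
    real_inner_comm]

theorem norm_polyakStep_sub_sq_le {x g z : E} {δ : ℝ} (hδ : 0 ≤ δ) (hle : δ ≤ ⟪g, x - z⟫) :
    ‖polyakStep x g δ - z‖ ^ 2 ≤ ‖x - z‖ ^ 2 - (δ / ‖g‖) ^ 2 := by
  have hinner : (δ / ‖g‖) ^ 2 ≤ δ / ‖g‖ ^ 2 * ⟪g, x - z⟫ :=
    calc (δ / ‖g‖) ^ 2 = δ / ‖g‖ ^ 2 * δ := by ring
      _ ≤ δ / ‖g‖ ^ 2 * ⟪g, x - z⟫ := by gcongr
  linarith [norm_polyakStep_sub_sq x g z δ]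

theorem sum_sq_div_norm_le_of_polyakStep {x g : ℕ → E} {δ : ℕ → ℝ} {z : E} {k : ℕ}
    (hδ : ∀ t < k, 0 ≤ δ t) (hle : ∀ t < k, δ t ≤ ⟪g t, x t - z⟫)
    (hstep : ∀ t < k, x (t + 1) = polyakStep (x t) (g t) (δ t)) :
    ∑ t ∈ Finset.range k, (δ t / ‖g t‖) ^ 2 ≤ ‖x 0 - z‖ ^ 2 := by
  have hdecrease : ∀ t ∈ Finset.range k,
      (δ t / ‖g t‖) ^ 2 ≤ ‖x t - z‖ ^ 2 - ‖x (t + 1) - z‖ ^ 2 := by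
    intro t ht
    have ht := Finset.mem_range.mp ht
    rw [hstep t ht]
    exact le_sub_comm.mp (norm_polyakStep_sub_sq_le (hδ t ht) (hle t ht))
  calc ∑ t ∈ Finset.range k, (δ t / ‖g t‖) ^ 2
      ≤ ∑ t ∈ Finset.range k, (‖x t - z‖ ^ 2 - ‖x (t + 1) - z‖ ^ 2) :=
        Finset.sum_le_sum hdecrease
    _ = ‖x 0 - z‖ ^ 2 - ‖x k - z‖ ^ 2 := Finset.sum_range_sub' (fun t ↦ ‖x t - z‖ ^ 2) k
    _ ≤ ‖x 0 - z‖ ^ 2 := sub_le_self _ (sq_nonneg _)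

theorem exists_div_norm_le_of_polyakStep {x g : ℕ → E} {δ : ℕ → ℝ} {z : E} {k : ℕ} (hk : 0 < k)
    (hδ : ∀ t < k, 0 ≤ δ t) (hle : ∀ t < k, δ t ≤ ⟪g t, x t - z⟫)
    (hstep : ∀ t < k, x (t + 1) = polyakStep (x t) (g t) (δ t)) :
    ∃ t < k, δ t / ‖g t‖ ≤ ‖x 0 - z‖ / √k := by
  simpa only [Finset.mem_range, Finset.card_range] using
    exists_le_div_sqrt_card_of_sum_sq_le (Finset.nonempty_range_iff.mpr hk.ne') (norm_nonneg _)
      (sum_sq_div_norm_le_of_polyakStep hδ hle hstep)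

theorem polyak_gd_convex_gbounded_rate_general {f : E → ℝ} {x g : ℕ → E} {z : E} {G : ℝ} {k : ℕ}
    (hk : 0 < k) (hG : ∀ t < k, ‖g t‖ ≤ G)
    (hsub : ∀ t < k, f (x t) + ⟪g t, z - x t⟫ ≤ f z)
    (hstep : ∀ t < k, x (t + 1) = polyakStep (x t) (g t) (f (x t) - f z)) :
    ∃ t < k, f (x t) - f z ≤ G * ‖x 0 - z‖ / √k := by
  have hle : ∀ t < k, f (x t) - f z ≤ ⟪g t, x t - z⟫ := fun t ht ↦ by
    have hsub_t := hsub t ht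
    rw [← neg_sub, inner_neg_right] at hsub_t
    linarith
  by_cases hpos : ∀ t < k, 0 < f (x t) - f z
  · obtain ⟨t, ht, hratio⟩ :=
      exists_div_norm_le_of_polyakStep hk (fun t ht ↦ (hpos t ht).le) hle hstep
    have hg : 0 < ‖g t‖ := pos_of_mul_pos_left
      (((hpos t ht).trans_le (hle t ht)).trans_le (real_inner_le_norm _ _)) (norm_nonneg _)
    refine ⟨t, ht, ?_⟩
    calc f (x t) - f z ≤ ‖x 0 - z‖ / √k * ‖g t‖ := (div_le_iff₀ hg).mp hratio
      _ ≤ ‖x 0 - z‖ / √k * G := by gcongr; exact hG t ht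
      _ = G * ‖x 0 - z‖ / √k := by ring
  · push Not at hpos
    obtain ⟨t, ht, hgap⟩ := hpos
    have hG_nonneg : 0 ≤ G := (norm_nonneg _).trans (hG t ht)
    exact ⟨t, ht, hgap.trans (by positivity)⟩

end PolyakStep

/-- Gradient descent with Polyak stepsizes on a convex differentiable function
with G-bounded gradients satisfies min_{t < k} (f(xᵗ) - f*) ≤ G‖x⁰ - x*‖/√k. -/
theorem polyak_gd_convex_gbounded_rate
    (d : ℕ) (f : EuclideanSpace ℝ (Fin d) → ℝ)
    (hf : Differentiable ℝ f)
    (hconv : ∀ x y : EuclideanSpace ℝ (Fin d),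
      f y ≥ f x + ⟪gradient f x, y - x⟫)
    (xstar : EuclideanSpace ℝ (Fin d)) (hmin : ∀ z, f xstar ≤ f z)
    (G : ℝ) (x : ℕ → EuclideanSpace ℝ (Fin d)) (k : ℕ) (hk : 0 < k)
    (hG : ∀ t < k, ‖gradient f (x t)‖ ≤ G)
    (hgrad : ∀ t < k, gradient f (x t) ≠ 0)
    (hstep : ∀ t < k, x (t + 1) =
      x t - ((f (x t) - f xstar) / ‖gradient f (x t)‖ ^ 2) • gradient f (x t)) :
    ∃ t < k, f (x t) - f xstar ≤ G * ‖x 0 - xstar‖ / Real.sqrt k :=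
  polyak_gd_convex_gbounded_rate_general hk hG (fun t _ ↦ hconv (x t) xstar) hstep
end

section
/- Let f : ℝ^d → ℝ be differentiable, L-smooth (L > 0), with minimizer x* and f* = f(x*). Let x, y ∈ ℝ^d satisfy f(x) > f(y), ∇f(x) ≠ 0, and the separation condition |f(x) − f(y)| ≥ a·(max{f(x), f(y)} − f*) for some 0 < a < 1. Then the Twin-Polyak stepsize η = 2(f(x) − f(y))/‖∇f(x)‖² satisfies η ≥ 2a(f(x) − f*)/‖∇f(x)‖² ≥ a/L. -/
/-!
For `f x > f y` the separation condition reads `f x - f y ≥ a (f x - f*)`, which is the first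
inequality. For the second, one gradient step with stepsize `1 / L` from `x` decreases an
`L`-smooth `f` by at least `‖∇f(x)‖² / (2L)`, and the value reached cannot lie below `f*`.
Hence `‖∇f(x)‖² ≤ 2L (f x - f*)`, so `2 (f x - f*) / ‖∇f(x)‖² ≥ 1 / L`.
-/

local notation "⟪" x ", " y "⟫" => @inner ℝ _ _ x y

section QuadraticUpperBound

variable {E : Type*} [SeminormedAddCommGroup E] [InnerProductSpace ℝ E]

/-- The function `f` lies below the quadratic model with slope `g` and curvature `L` based at `x`.
An `L`-smooth function has this property at every `x` with `g = ∇f(x)`. The slope is a separate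
argument because `gradient` lives in complete spaces and is `0` where `f` is not differentiable. -/
def HasQuadraticUpperBoundAt (L : ℝ) (f : E → ℝ) (g x : E) : Prop :=
  ∀ z, f z ≤ f x + ⟪g, z - x⟫ + L / 2 * ‖z - x‖ ^ 2

namespace HasQuadraticUpperBoundAt

variable {L m : ℝ} {f : E → ℝ} {g x : E}

theorem apply_sub_smul_le (h : HasQuadraticUpperBoundAt L f g x) (t : ℝ) :
    f (x - t • g) ≤ f x - t * (1 - L * t / 2) * ‖g‖ ^ 2 :=
  calc f (x - t • g) ≤ f x + ⟪g, x - t • g - x⟫ + L / 2 * ‖x - t • g - x‖ ^ 2 := h _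
    _ = f x + -(t * ‖g‖ ^ 2) + L / 2 * (t ^ 2 * ‖g‖ ^ 2) := by
      rw [sub_sub_cancel_left, inner_neg_right, real_inner_smul_right, real_inner_self_eq_norm_sq,
        norm_neg, norm_smul, mul_pow, Real.norm_eq_abs, sq_abs]
    _ = f x - t * (1 - L * t / 2) * ‖g‖ ^ 2 := by ring

theorem apply_sub_inv_smul_le (h : HasQuadraticUpperBoundAt L f g x) (hL : L ≠ 0) :
    f (x - L⁻¹ • g) ≤ f x - ‖g‖ ^ 2 / (2 * L) :=
  calc f (x - L⁻¹ • g) ≤ f x - L⁻¹ * (1 - L * L⁻¹ / 2) * ‖g‖ ^ 2 := h.apply_sub_smul_le L⁻¹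
    _ = f x - ‖g‖ ^ 2 / (2 * L) := by
      rw [mul_inv_cancel₀ hL]
      ring

theorem norm_sq_le (h : HasQuadraticUpperBoundAt L f g x) (hL : 0 < L) (hm : ∀ z, m ≤ f z) :
    ‖g‖ ^ 2 ≤ 2 * L * (f x - m) := by
  have hdecrease : ‖g‖ ^ 2 / (2 * L) ≤ f x - m := by
    linarith [hm (x - L⁻¹ • g), h.apply_sub_inv_smul_le hL.ne']
  rwa [div_le_iff₀' (by positivity)] at hdecrease

theorem inv_le_two_mul_sub_div_norm_sq (h : HasQuadraticUpperBoundAt L f g x) (hL : 0 < L)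
    (hm : ∀ z, m ≤ f z) (hg : ‖g‖ ≠ 0) : L⁻¹ ≤ 2 * (f x - m) / ‖g‖ ^ 2 := by
  rw [le_div_iff₀ (by positivity), inv_mul_le_iff₀ hL]
  linarith [h.norm_sq_le hL hm]

end HasQuadraticUpperBoundAt

end QuadraticUpperBound

theorem twin_polyak_stepsize_lower_bound_general
    {E : Type*} [NormedAddCommGroup E] [InnerProductSpace ℝ E] [CompleteSpace E]
    {f : E → ℝ} {L m a : ℝ} {x y : E} (hL : 0 < L)
    (hsmooth : HasQuadraticUpperBoundAt L f (gradient f x) x) (hm : ∀ z, m ≤ f z)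
    (hxy : f y < f x) (hgrad : gradient f x ≠ 0) (ha : 0 ≤ a)
    (hsep : a * (max (f x) (f y) - m) ≤ |f x - f y|) :
    2 * a * (f x - m) / ‖gradient f x‖ ^ 2 ≤ 2 * (f x - f y) / ‖gradient f x‖ ^ 2
      ∧ a / L ≤ 2 * a * (f x - m) / ‖gradient f x‖ ^ 2 := by
  constructor
  · have hgap : a * (f x - m) ≤ f x - f y := by
      rwa [max_eq_left hxy.le, abs_of_pos (sub_pos.mpr hxy)] at hsep
    rw [mul_assoc]
    gcongr
  · calc a / L = a * L⁻¹ := div_eq_mul_inv a L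
      _ ≤ a * (2 * (f x - m) / ‖gradient f x‖ ^ 2) := by
        gcongr
        exact hsmooth.inv_le_two_mul_sub_div_norm_sq hL hm (norm_ne_zero_iff.mpr hgrad)
      _ = 2 * a * (f x - m) / ‖gradient f x‖ ^ 2 := by ring

/-- Under the separation assumption (a), the Twin-Polyak stepsize
η = 2(f(x) - f(y))/‖∇f(x)‖² is bounded below by 2a(f(x) - f*)/‖∇f(x)‖² ≥ a/L
for an L-smooth function. -/
theorem twin_polyak_stepsize_lower_bound
    (d : ℕ) (f : EuclideanSpace ℝ (Fin d) → ℝ) (L : ℝ) (hL : 0 < L)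
    (hf : Differentiable ℝ f)
    (hsmooth : ∀ x y : EuclideanSpace ℝ (Fin d),
      f y ≤ f x + ⟪gradient f x, y - x⟫ + L / 2 * ‖y - x‖ ^ 2)
    (xstar : EuclideanSpace ℝ (Fin d)) (hmin : ∀ z, f xstar ≤ f z)
    (x y : EuclideanSpace ℝ (Fin d)) (hxy : f x > f y)
    (hgrad : gradient f x ≠ 0)
    (a : ℝ) (ha0 : 0 < a) (ha1 : a < 1)
    (hsep : |f x - f y| ≥ a * (max (f x) (f y) - f xstar)) :
    2 * (f x - f y) / ‖gradient f x‖ ^ 2 ≥ 2 * a * (f x - f xstar) / ‖gradient f x‖ ^ 2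
      ∧ 2 * a * (f x - f xstar) / ‖gradient f x‖ ^ 2 ≥ a / L :=
  twin_polyak_stepsize_lower_bound_general hL (hsmooth x) hmin hxy hgrad ha0.le hsep
end

section
/- Let f : ℝ^d → ℝ be differentiable and convex with minimizer x* and f* = f(x*). Let x, y ∈ ℝ^d with f(x) > f(y), ∇f(x) ≠ 0, and suppose there exist constants 0 < a < 1 and 0 < b < 1 with f(x) − f(y) ≥ a(f(x) − f*) and f(y) − f* ≥ b(f(x) − f*). Then the Twin-Polyak step x⁺ = x − 2((f(x) − f(y))/‖∇f(x)‖²)∇f(x) satisfies ‖x⁺ − x*‖² ≤ ‖x − x*‖² − 4ab·(f(x) − f*)²/‖∇f(x)‖². -/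
/-!
Write `g = ∇f(x)` and `t = f(x) - f(y)`. Expanding the square with stepsize `2t/‖g‖²` gives
`‖x⁺ - x*‖² = ‖x - x*‖² - 4t(⟨g, x - x*⟩ - t)/‖g‖²`. Convexity gives `⟨g, x - x*⟩ ≥ f(x) - f*`,
so the decrease is at least `4(f(x) - f(y))(f(y) - f*)/‖g‖²`, and the two assumptions bound the
factors `f(x) - f(y)` and `f(y) - f*` from below by `a(f(x) - f*)` and `b(f(x) - f*)`.
-/

local notation "⟪" x ", " y "⟫" => @inner ℝ _ _ x y

section Subgradient

variable {E : Type*} [NormedAddCommGroup E] [InnerProductSpace ℝ E] {f : E → ℝ} {g x y z : E}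

theorem norm_sub_div_norm_sq_smul_sub_sq (hg : g ≠ 0) (s : ℝ) :
    ‖(x - (s / ‖g‖ ^ 2) • g) - z‖ ^ 2
      = ‖x - z‖ ^ 2 - s * (2 * ⟪g, x - z⟫ - s) / ‖g‖ ^ 2 := by
  have hg' : ‖g‖ ≠ 0 := norm_ne_zero_iff.mpr hg
  rw [sub_right_comm, norm_sub_sq_real, real_inner_smul_right, real_inner_comm, norm_smul,
    mul_pow, Real.norm_eq_abs, sq_abs]
  field_simp
  ring

theorem sub_le_inner_sub_of_subgradient (hsub : f x + ⟪g, z - x⟫ ≤ f z) :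
    f x - f z ≤ ⟪g, x - z⟫ := by
  rw [← neg_sub x z, inner_neg_right] at hsub
  linarith

theorem norm_twin_polyak_step_sub_sq_le (hsub : f x + ⟪g, z - x⟫ ≤ f z) (hg : g ≠ 0)
    (hyx : f y ≤ f x) :
    ‖(x - (2 * ((f x - f y) / ‖g‖ ^ 2)) • g) - z‖ ^ 2
      ≤ ‖x - z‖ ^ 2 - 4 * ((f x - f y) * (f y - f z)) / ‖g‖ ^ 2 := by
  have hinner : f y - f z ≤ ⟪g, x - z⟫ - (f x - f y) := by
    linarith [sub_le_inner_sub_of_subgradient hsub]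
  have hprod : (f x - f y) * (f y - f z) ≤ (f x - f y) * (⟪g, x - z⟫ - (f x - f y)) :=
    mul_le_mul_of_nonneg_left hinner (sub_nonneg.mpr hyx)
  calc
    _ = ‖x - z‖ ^ 2 - 4 * ((f x - f y) * (⟪g, x - z⟫ - (f x - f y))) / ‖g‖ ^ 2 := by
      rw [← mul_div_assoc, norm_sub_div_norm_sq_smul_sub_sq hg]
      ring
    _ ≤ _ := by gcongr

theorem twin_polyak_step_descent_general (hsub : f x + ⟪g, z - x⟫ ≤ f z) (hg : g ≠ 0)
    (hzx : f z ≤ f x) {a b : ℝ} (ha : 0 ≤ a) (hb : 0 ≤ b)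
    (hsepa : a * (f x - f z) ≤ f x - f y) (hsepb : b * (f x - f z) ≤ f y - f z) :
    ‖(x - (2 * ((f x - f y) / ‖g‖ ^ 2)) • g) - z‖ ^ 2
      ≤ ‖x - z‖ ^ 2 - 4 * a * b * (f x - f z) ^ 2 / ‖g‖ ^ 2 := by
  have hΔ : 0 ≤ f x - f z := sub_nonneg.mpr hzx
  have hgap : 0 ≤ f x - f y := (mul_nonneg ha hΔ).trans hsepa
  calc
    _ ≤ ‖x - z‖ ^ 2 - 4 * ((f x - f y) * (f y - f z)) / ‖g‖ ^ 2 :=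
      norm_twin_polyak_step_sub_sq_le hsub hg (sub_nonneg.mp hgap)
    _ ≤ ‖x - z‖ ^ 2 - 4 * ((a * (f x - f z)) * (b * (f x - f z))) / ‖g‖ ^ 2 := by gcongr
    _ = _ := by ring

end Subgradient

/-- Under Assumptions (a) and (b), one Twin-Polyak step on a convex
differentiable function decreases the squared distance to the minimizer by at least
4ab(f(x) - f*)²/‖∇f(x)‖². -/
theorem twin_polyak_step_descent
    (d : ℕ) (f : EuclideanSpace ℝ (Fin d) → ℝ)
    (hf : Differentiable ℝ f)
    (hconv : ∀ x y : EuclideanSpace ℝ (Fin d),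
      f y ≥ f x + ⟪gradient f x, y - x⟫)
    (xstar : EuclideanSpace ℝ (Fin d)) (hmin : ∀ z, f xstar ≤ f z)
    (x y : EuclideanSpace ℝ (Fin d)) (hxy : f x > f y)
    (hgrad : gradient f x ≠ 0)
    (a b : ℝ) (ha0 : 0 < a) (ha1 : a < 1) (hb0 : 0 < b) (hb1 : b < 1)
    (hsepa : f x - f y ≥ a * (f x - f xstar))
    (hsepb : f y - f xstar ≥ b * (f x - f xstar)) :
    ‖(x - (2 * ((f x - f y) / ‖gradient f x‖ ^ 2)) • gradient f x) - xstar‖ ^ 2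
      ≤ ‖x - xstar‖ ^ 2 - 4 * a * b * (f x - f xstar) ^ 2 / ‖gradient f x‖ ^ 2 :=
  twin_polyak_step_descent_general (hconv x xstar) hgrad (hmin x) ha0.le hb0.le hsepa hsepb
end

section
/- Let f : ℝ^d → ℝ be the quadratic function f(x) = (1/2)‖x‖² + c for a constant c ∈ ℝ. Let x^k, y^k ∈ ℝ^d with ‖x^k‖ > ‖y^k‖ > 0 (i.e. f(x^k) > f(y^k)), and let the Twin-Polyak update be x^{k+1} = x^k − 2((f(x^k) − f(y^k))/‖∇f(x^k)‖²)∇f(x^k), y^{k+1} = y^k. Then ‖x^{k+1}‖²/‖y^{k+1}‖² = ‖y^k‖²/‖x^k‖²; in particular f(x^{k+1}) < f(y^k), so the two sequences change their relative position at each step. -/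
/-!
For `f z = a * ‖z‖ ^ 2 + c` the gradient `2 a x` is radial, so a Twin-Polyak step only rescales `x`,
and the factor `1 - (‖x‖² - ‖y‖²) / ‖x‖² = ‖y‖² / ‖x‖²` no longer involves `a` or `c`. The new norm
`‖y‖² / ‖x‖` makes `‖y‖` the geometric mean of the norms of `x` before and after the step.
-/

section TwinPolyak

open scoped Gradient

variable {E : Type*} [NormedAddCommGroup E] [InnerProductSpace ℝ E] [CompleteSpace E]

/-- The update of the Twin-Polyak method applied to the iterate `x`, with the twin `y` providing
the target value. The method applies it to the iterate with the larger value of `f`; that choice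
is left to the caller. -/
noncomputable def twinPolyakStep (f : E → ℝ) (x y : E) : E :=
  x - (2 * ((f x - f y) / ‖∇ f x‖ ^ 2)) • ∇ f x

theorem hasGradientAt_const_mul_norm_sq_add_const (a c : ℝ) (x : E) :
    HasGradientAt (fun z ↦ a * ‖z‖ ^ 2 + c) ((2 * a) • x) x := by
  have hdual : InnerProductSpace.toDual ℝ E ((2 * a) • x) = a • 2 • innerSL ℝ x := by
    ext v
    simp only [map_smul, smul_apply, InnerProductSpace.toDual_apply_apply, smul_eq_mul,
      coe_innerSL_apply, nsmul_eq_mul, Nat.cast_ofNat]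
    ring
  rw [hasGradientAt_iff_hasFDerivAt, hdual]
  exact ((hasStrictFDerivAt_norm_sq x).hasFDerivAt.const_mul a).add_const c

theorem twinPolyakStep_const_mul_norm_sq_add_const {a : ℝ} (ha : a ≠ 0) (c : ℝ) {x : E}
    (hx : x ≠ 0) (y : E) :
    twinPolyakStep (fun z ↦ a * ‖z‖ ^ 2 + c) x y = (‖y‖ ^ 2 / ‖x‖ ^ 2) • x := by
  have hx' : ‖x‖ ≠ 0 := norm_ne_zero_iff.mpr hx
  have hfactor : 1 - 2 * ((a * ‖x‖ ^ 2 + c - (a * ‖y‖ ^ 2 + c)) / ‖(2 * a) • x‖ ^ 2) * (2 * a) =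
      ‖y‖ ^ 2 / ‖x‖ ^ 2 := by
    rw [norm_smul, mul_pow, Real.norm_eq_abs, sq_abs]
    field_simp
    ring
  rw [twinPolyakStep, (hasGradientAt_const_mul_norm_sq_add_const a c x).gradient, ← hfactor,
    sub_smul, one_smul, smul_smul]

theorem norm_twinPolyakStep_const_mul_norm_sq_add_const {a : ℝ} (ha : a ≠ 0) (c : ℝ) {x : E}
    (hx : x ≠ 0) (y : E) :
    ‖twinPolyakStep (fun z ↦ a * ‖z‖ ^ 2 + c) x y‖ = ‖y‖ ^ 2 / ‖x‖ := by
  have hx' : ‖x‖ ≠ 0 := norm_ne_zero_iff.mpr hx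
  rw [twinPolyakStep_const_mul_norm_sq_add_const ha c hx, norm_smul,
    Real.norm_of_nonneg (by positivity)]
  field_simp

theorem twin_polyak_quadratic_swap_general {a : ℝ} (ha : 0 < a) (c : ℝ) {f : E → ℝ}
    (hf : f = fun z ↦ a * ‖z‖ ^ 2 + c) {x y : E} (hxy : ‖y‖ < ‖x‖) (hy : 0 < ‖y‖) :
    ‖twinPolyakStep f x y‖ ^ 2 / ‖y‖ ^ 2 = ‖y‖ ^ 2 / ‖x‖ ^ 2 ∧ f (twinPolyakStep f x y) < f y := by
  have hx : 0 < ‖x‖ := hy.trans hxy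
  have hnorm : ‖twinPolyakStep f x y‖ = ‖y‖ ^ 2 / ‖x‖ := by
    rw [hf, norm_twinPolyakStep_const_mul_norm_sq_add_const ha.ne' c (norm_pos_iff.mp hx)]
  have hlt : ‖twinPolyakStep f x y‖ < ‖y‖ := by
    rw [hnorm, div_lt_iff₀ hx, sq]
    gcongr
  constructor
  · rw [hnorm]
    field_simp
  · calc f (twinPolyakStep f x y) = a * ‖twinPolyakStep f x y‖ ^ 2 + c := congrFun hf _
      _ < a * ‖y‖ ^ 2 + c := by gcongr
      _ = f y := (congrFun hf y).symm

end TwinPolyak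

/-- For the quadratic f(x) = (1/2)‖x‖² + c, one Twin-Polyak step inverts the
ratio of squared norms of the two sequences, ‖x^{k+1}‖²/‖y^{k+1}‖² = ‖yᵏ‖²/‖xᵏ‖²,
and in particular f(x^{k+1}) < f(yᵏ): the sequences swap their relative position. -/
theorem twin_polyak_quadratic_swap
    (d : ℕ) (c : ℝ) (f : EuclideanSpace ℝ (Fin d) → ℝ)
    (hf : f = fun z => (1 / 2 : ℝ) * ‖z‖ ^ 2 + c)
    (xk yk xk1 yk1 : EuclideanSpace ℝ (Fin d))
    (hxy : ‖xk‖ > ‖yk‖) (hy : ‖yk‖ > 0)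
    (hstepx : xk1 = xk - (2 * ((f xk - f yk) / ‖gradient f xk‖ ^ 2)) • gradient f xk)
    (hstepy : yk1 = yk) :
    ‖xk1‖ ^ 2 / ‖yk1‖ ^ 2 = ‖yk‖ ^ 2 / ‖xk‖ ^ 2 ∧ f xk1 < f yk := by
  subst hstepx hstepy
  exact twin_polyak_quadratic_swap_general one_half_pos c hf hxy hy
end

section
/- Let f : ℝ^d → ℝ be the quadratic function f(x) = (1/2)‖x‖², and let (x^k, y^k) be the Twin-Polyak iterates started from x^0, y^0 with ‖x^0‖ > ‖y^0‖ > 0; at each step the iterate with larger ‖·‖ is replaced by (min‖·‖²/max‖·‖²) times itself (the TP update for this f), and the other is unchanged. Set ρ = ‖y^0‖²/‖x^0‖² < 1. Then for all k ≥ 0, max{‖x^k‖², ‖y^k‖²} = ρ^k ‖x^0‖²; in particular both sequences converge linearly to the solution x* = 0 with factor ρ = ‖y^0‖²/‖x^0‖². -/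
/-!
A step sends the squared norms `M ≥ m` of the two iterates to `m` and `(m / M) * m`: the larger
iterate is scaled past the smaller one, and their ratio is preserved. If `m = ρ * M` initially, then
after `k` steps the larger and the smaller squared norms are therefore `ρ ^ k * M` and
`ρ ^ (k + 1) * M`.
-/

section TwinPolyak

variable {E : Type*} [SeminormedAddCommGroup E] [NormedSpace ℝ E]

lemma norm_sq_div_norm_sq_smul (u v : E) :
    ‖(‖v‖ ^ 2 / ‖u‖ ^ 2) • u‖ ^ 2 = ‖v‖ ^ 2 / ‖u‖ ^ 2 * ‖v‖ ^ 2 := by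
  rw [norm_smul, mul_pow, Real.norm_eq_abs, sq_abs]
  field_simp

lemma norm_sq_div_norm_sq_smul_le {u v : E} (h : ‖v‖ ≤ ‖u‖) :
    ‖(‖v‖ ^ 2 / ‖u‖ ^ 2) • u‖ ^ 2 ≤ ‖v‖ ^ 2 := by
  rw [norm_sq_div_norm_sq_smul]
  have hratio : ‖v‖ ^ 2 / ‖u‖ ^ 2 ≤ 1 := div_le_one_of_le₀ (by gcongr) (by positivity)
  exact mul_le_of_le_one_left (by positivity) hratio

/-- One Twin-Polyak step from the pair `(u, v)` to the pair `(u', v')` for the objective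
`f z = ‖z‖ ^ 2 / 2`. In Euclidean space `∇f u = u`, so the update
`u - (2 * (f u - f v) / ‖∇f u‖ ^ 2) • ∇f u` of a larger iterate `u` is `(‖v‖ ^ 2 / ‖u‖ ^ 2) • u`;
this formula is used in any seminormed space. In a tie the first iterate is the one updated. -/
def IsTwinPolyakStep (u v u' v' : E) : Prop :=
  (‖v‖ ≤ ‖u‖ → u' = (‖v‖ ^ 2 / ‖u‖ ^ 2) • u ∧ v' = v) ∧
    (‖u‖ < ‖v‖ → v' = (‖u‖ ^ 2 / ‖v‖ ^ 2) • v ∧ u' = u)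

namespace IsTwinPolyakStep

variable {u v u' v' : E}

lemma max_norm_sq (h : IsTwinPolyakStep u v u' v') :
    max (‖u'‖ ^ 2) (‖v'‖ ^ 2) = min (‖u‖ ^ 2) (‖v‖ ^ 2) := by
  rcases le_or_gt ‖v‖ ‖u‖ with hvu | huv
  · obtain ⟨rfl, rfl⟩ := h.1 hvu
    rw [max_eq_right (norm_sq_div_norm_sq_smul_le hvu), min_eq_right (by gcongr)]
  · obtain ⟨rfl, rfl⟩ := h.2 huv
    rw [max_eq_left (norm_sq_div_norm_sq_smul_le huv.le), min_eq_left (by gcongr)]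

lemma min_norm_sq (h : IsTwinPolyakStep u v u' v') :
    min (‖u'‖ ^ 2) (‖v'‖ ^ 2) =
      min (‖u‖ ^ 2) (‖v‖ ^ 2) / max (‖u‖ ^ 2) (‖v‖ ^ 2) * min (‖u‖ ^ 2) (‖v‖ ^ 2) := by
  rcases le_or_gt ‖v‖ ‖u‖ with hvu | huv
  · obtain ⟨rfl, rfl⟩ := h.1 hvu
    rw [min_eq_left (norm_sq_div_norm_sq_smul_le hvu), norm_sq_div_norm_sq_smul,
      min_eq_right (by gcongr), max_eq_left (by gcongr)]
  · obtain ⟨rfl, rfl⟩ := h.2 huv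
    rw [min_eq_right (norm_sq_div_norm_sq_smul_le huv.le), norm_sq_div_norm_sq_smul,
      min_eq_left (by gcongr), max_eq_right (by gcongr)]

lemma max_min_norm_sq_iterate {x y : ℕ → E} {ρ M : ℝ}
    (hstep : ∀ k, IsTwinPolyakStep (x k) (y k) (x (k + 1)) (y (k + 1)))
    (hmax : max (‖x 0‖ ^ 2) (‖y 0‖ ^ 2) = M) (hmin : min (‖x 0‖ ^ 2) (‖y 0‖ ^ 2) = ρ * M) (k : ℕ) :
    max (‖x k‖ ^ 2) (‖y k‖ ^ 2) = ρ ^ k * M ∧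
      min (‖x k‖ ^ 2) (‖y k‖ ^ 2) = ρ ^ (k + 1) * M := by
  induction k with
  | zero => simpa using ⟨hmax, hmin⟩
  | succ k ih =>
    obtain ⟨ihmax, ihmin⟩ := ih
    refine ⟨(hstep k).max_norm_sq.trans ihmin, ?_⟩
    rw [(hstep k).min_norm_sq, ihmax, ihmin]
    calc ρ ^ (k + 1) * M / (ρ ^ k * M) * (ρ ^ (k + 1) * M)
        = ρ ^ 2 * ((ρ ^ k * M) / (ρ ^ k * M) * (ρ ^ k * M)) := by ring
      _ = ρ ^ (k + 1 + 1) * M := by rw [div_self_mul_self]; ring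

end IsTwinPolyakStep

theorem twin_polyak_quadratic_linear_convergence_general {x y : ℕ → E} {ρ : ℝ}
    (hstep : ∀ k, IsTwinPolyakStep (x k) (y k) (x (k + 1)) (y (k + 1)))
    (hle : ‖y 0‖ ≤ ‖x 0‖) (hρ : ‖y 0‖ ^ 2 = ρ * ‖x 0‖ ^ 2) (k : ℕ) :
    max (‖x k‖ ^ 2) (‖y k‖ ^ 2) = ρ ^ k * ‖x 0‖ ^ 2 := by
  have hle_sq : ‖y 0‖ ^ 2 ≤ ‖x 0‖ ^ 2 := by gcongr
  have hmin : min (‖x 0‖ ^ 2) (‖y 0‖ ^ 2) = ρ * ‖x 0‖ ^ 2 := (min_eq_right hle_sq).trans hρ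
  exact (IsTwinPolyakStep.max_min_norm_sq_iterate hstep (max_eq_left hle_sq) hmin k).1

end TwinPolyak

/-- For f(x) = (1/2)‖x‖², the Twin-Polyak iterates satisfy
max{‖xᵏ‖², ‖yᵏ‖²} = ρᵏ ‖x⁰‖² where ρ = ‖y⁰‖²/‖x⁰‖² < 1: both sequences converge linearly
to the solution x* = 0 with factor ρ. -/
theorem twin_polyak_quadratic_linear_convergence
    (d : ℕ) (f : EuclideanSpace ℝ (Fin d) → ℝ)
    (hf : f = fun z => (1 / 2 : ℝ) * ‖z‖ ^ 2)
    (x y : ℕ → EuclideanSpace ℝ (Fin d))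
    (hx0 : ‖x 0‖ > ‖y 0‖) (hy0 : ‖y 0‖ > 0)
    (hstep : ∀ k : ℕ,
      (‖x k‖ ≥ ‖y k‖ →
        x (k + 1) = (‖y k‖ ^ 2 / ‖x k‖ ^ 2) • x k ∧ y (k + 1) = y k) ∧
      (‖y k‖ > ‖x k‖ →
        y (k + 1) = (‖x k‖ ^ 2 / ‖y k‖ ^ 2) • y k ∧ x (k + 1) = x k)) :
    ∀ k : ℕ, max (‖x k‖ ^ 2) (‖y k‖ ^ 2)
      = (‖y 0‖ ^ 2 / ‖x 0‖ ^ 2) ^ k * ‖x 0‖ ^ 2 :=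
  twin_polyak_quadratic_linear_convergence_general hstep hx0.le
    (div_mul_cancel₀ _ (pow_pos (hy0.trans hx0) 2).ne').symm
end
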